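/- Assume (A1) r has all coordinates strictly positive and (A2) M_{ij} ≤ 0 for all i ≠ j, where M = XᵀX and r = Xᵀy. For each s ≥ 0, let (w(s), z(s)) be the unique solution of the linear complementarity problem w = k − s·r + Mz, w ≥ 0, z ≥ 0, wᵀz = 0. For ε ∈ (0,1) and s ≥ 0, define w_i^{(ε)}(s) = log(θ_i^{(ε)}(s · log(1/ε))) / log ε and z^{(ε)}(s) = ∫₀^s θ^{(ε)}(u · log(1/ε)) du. Then as ε → 0, w^{(ε)}(s) → w(s) and z^{(ε)}(s) → z(s), uniformly for s in compact subsets of [0,∞). -/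

import Mathlib

open Matrix

/-!
Along a solution of the DLN equation the growth rate `r - M θ` satisfies a linear system whose
matrix has nonnegative off-diagonal entries, so it stays positive once it is positive at time `0`,
which holds for small `ε`. Hence every `θ_i` increases, and `z^{(ε)}(s) ≤ s θ^{(ε)}(s log (1/ε))`.
Integrating `(log θ_i)' = r_i - (M θ)_i` shows that `z^{(ε)}` satisfies the LCP equation with slack
`-log (θ_i / C_i) / log (1/ε)`; by the previous bound and `1 - 1/x ≤ log x`, complementarity fails
only by `O(1 / log (1/ε))`. Since `M` is positive definite (`vᵀ M v ≥ |v|ᵀ M |v| = ‖X |v|‖²`, and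
`⟨y, X |v|⟩ = ⟨r, |v|⟩ > 0`), it follows that `‖z^{(ε)}(s) - z(s)‖² = O(1 / log (1/ε))`, and the
convergence of `w^{(ε)}` is read off from the linear equation.
-/

open Set Filter Topology

section

variable {ι : Type*} [Fintype ι]

section Coercive

theorem exists_pos_mul_norm_sq_le_dotProduct_mulVec {M : Matrix ι ι ℝ}
    (hM : ∀ v ≠ 0, 0 < v ⬝ᵥ M *ᵥ v) : ∃ c > 0, ∀ v, c * ‖v‖ ^ 2 ≤ v ⬝ᵥ M *ᵥ v := by
  have hcont : Continuous fun v : ι → ℝ => v ⬝ᵥ M *ᵥ v := by fun_prop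
  obtain ⟨c, hc, hmin⟩ := (isCompact_sphere (0 : ι → ℝ) 1).exists_forall_le' hcont.continuousOn
    fun v hv => hM v (Metric.ne_of_mem_sphere hv one_ne_zero)
  refine ⟨c, hc, fun v => ?_⟩
  rcases eq_or_ne v 0 with rfl | hv
  · simp
  have hnorm : 0 < ‖v‖ := norm_pos_iff.2 hv
  have hunit : ‖v‖⁻¹ • v ∈ Metric.sphere (0 : ι → ℝ) 1 := by simp [norm_smul, hnorm.ne']
  calc c * ‖v‖ ^ 2 ≤ (‖v‖⁻¹ • v) ⬝ᵥ M *ᵥ (‖v‖⁻¹ • v) * ‖v‖ ^ 2 := by gcongr; exact hmin _ hunit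
    _ = v ⬝ᵥ M *ᵥ v := by
      simp only [mulVec_smul, smul_dotProduct, dotProduct_smul, smul_eq_mul]
      field_simp

theorem dotProduct_le_norm_mul_sum_abs (v r : ι → ℝ) : v ⬝ᵥ r ≤ ‖v‖ * ∑ i, |r i| := by
  rw [dotProduct, Finset.mul_sum]
  refine Finset.sum_le_sum fun i _ => (le_abs_self _).trans ?_
  rw [abs_mul]
  gcongr
  exact norm_le_pi_norm v i

theorem norm_le_of_mul_norm_sq_le_mul_dotProduct {c s : ℝ} (hc : 0 < c) (hs : 0 ≤ s)
    {v r : ι → ℝ} (h : c * ‖v‖ ^ 2 ≤ s * v ⬝ᵥ r) : ‖v‖ ≤ s * ((∑ i, |r i|) / c) := by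
  rcases (norm_nonneg v).eq_or_lt with hv | hv
  · rw [← hv]; positivity
  · rw [← mul_div_assoc, le_div_iff₀ hc]
    refine le_of_mul_le_mul_right ?_ hv
    calc ‖v‖ * c * ‖v‖ = c * ‖v‖ ^ 2 := by ring
      _ ≤ s * (‖v‖ * ∑ i, |r i|) := by grw [h, dotProduct_le_norm_mul_sum_abs]
      _ = s * (∑ i, |r i|) * ‖v‖ := by ring

theorem abs_dotProduct_mulVec_abs_le {M : Matrix ι ι ℝ} (hM : ∀ i j, i ≠ j → M i j ≤ 0)
    (v : ι → ℝ) : |v| ⬝ᵥ M *ᵥ |v| ≤ v ⬝ᵥ M *ᵥ v := by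
  simp only [dotProduct, mulVec, Finset.mul_sum, Pi.abs_apply]
  refine Finset.sum_le_sum fun i _ => Finset.sum_le_sum fun j _ => ?_
  rcases eq_or_ne i j with rfl | hij
  · exact le_of_eq (by linear_combination M i i * abs_mul_abs_self (v i))
  · have h : v i * v j ≤ |v i| * |v j| := abs_mul (v i) (v j) ▸ le_abs_self _
    linarith [mul_le_mul_of_nonpos_left h (hM i j hij)]

theorem dotProduct_gram_mulVec_pos {m : Type*} [Fintype m] {X : Matrix m ι ℝ} {y : m → ℝ}
    (hr : ∀ i, 0 < (Xᵀ *ᵥ y) i) (hX : ∀ i j, i ≠ j → (Xᵀ * X) i j ≤ 0) {v : ι → ℝ} (hv : v ≠ 0) :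
    0 < v ⬝ᵥ (Xᵀ * X) *ᵥ v := by
  have hpos : 0 < y ⬝ᵥ X *ᵥ |v| := by
    rw [dotProduct_mulVec, ← mulVec_transpose]
    obtain ⟨i, hi⟩ := Function.ne_iff.1 hv
    exact Finset.sum_pos' (fun j _ => mul_nonneg (hr j).le (abs_nonneg _))
      ⟨i, Finset.mem_univ i, mul_pos (hr i) (abs_pos.2 hi)⟩
  have hne : X *ᵥ |v| ≠ 0 := fun h => by simp [h] at hpos
  calc 0 < (X *ᵥ |v|) ⬝ᵥ X *ᵥ |v| := by simpa using dotProduct_star_self_pos_iff.2 hne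
    _ = |v| ⬝ᵥ (Xᵀ * X) *ᵥ |v| := by
      rw [← mulVec_mulVec, dotProduct_mulVec _ Xᵀ, vecMul_transpose]
    _ ≤ v ⬝ᵥ (Xᵀ * X) *ᵥ v := abs_dotProduct_mulVec_abs_le hX v

end Coercive

section LCP

/-- The pair `(w, z)` solves the linear complementarity problem with matrix `M` and vector `q`. -/
structure IsLCPSolution (M : Matrix ι ι ℝ) (q w z : ι → ℝ) : Prop where
  eq_add_mulVec : w = q + M *ᵥ z
  slack_nonneg : 0 ≤ w
  nonneg : 0 ≤ z
  complementary : w ⬝ᵥ z = 0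

namespace IsLCPSolution

variable {M : Matrix ι ι ℝ} {q r k w z : ι → ℝ} {c s : ℝ}

-- Complementarity turns `(Z - z) ⬝ᵥ w` into `Z ⬝ᵥ w`, which is nonnegative.
theorem sub_dotProduct_mulVec_sub_le (h : IsLCPSolution M q w z) {Z : ι → ℝ} (hZ : 0 ≤ Z) :
    (Z - z) ⬝ᵥ M *ᵥ (Z - z) ≤ (Z - z) ⬝ᵥ (q + M *ᵥ Z) := by
  have hw : (Z - z) ⬝ᵥ w = Z ⬝ᵥ w := by
    rw [sub_dotProduct, dotProduct_comm z, h.complementary, sub_zero]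
  have hsplit : M *ᵥ (Z - z) = q + M *ᵥ Z - w := by rw [h.eq_add_mulVec, mulVec_sub]; abel
  rw [hsplit, dotProduct_sub, hw]
  exact sub_le_self _ (dotProduct_nonneg_of_nonneg hZ h.slack_nonneg)

theorem norm_le (hc : 0 < c) (hM : ∀ v, c * ‖v‖ ^ 2 ≤ v ⬝ᵥ M *ᵥ v) (hs : 0 ≤ s) (hk : 0 ≤ k)
    (h : IsLCPSolution M (k - s • r) w z) : ‖z‖ ≤ s * ((∑ i, |r i|) / c) := by
  refine norm_le_of_mul_norm_sq_le_mul_dotProduct hc hs ?_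
  have hle := h.sub_dotProduct_mulVec_sub_le le_rfl
  simp only [zero_sub, mulVec_zero, add_zero, mulVec_neg, neg_dotProduct, dotProduct_neg, neg_neg,
    dotProduct_sub, dotProduct_smul, smul_eq_mul] at hle
  linarith [hM z, dotProduct_nonneg_of_nonneg h.nonneg hk]

end IsLCPSolution

end LCP

section Metzler

variable {a b : ℝ} {A : ℝ → Matrix ι ι ℝ} {u : ℝ → ι → ℝ}

theorem le_of_hasDerivWithinAt_mulVec_of_nonneg
    (hu : ∀ t ∈ Icc a b, HasDerivWithinAt u (A t *ᵥ u t) (Icc a b) t)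
    (hA : ∀ t ∈ Icc a b, ∀ i j, 0 ≤ A t i j) (ha : ∀ i, 0 < u a i) {t : ℝ} (ht : t ∈ Icc a b) :
    u a ≤ u t := by
  have hcont : ContinuousOn u (Icc a b) := fun t ht => (hu t ht).continuousWithinAt
  have hclosed : IsClosed ({t | u a ≤ u t} ∩ Icc a b) := by
    rw [inter_comm]
    exact hcont.preimage_isClosed_of_isClosed isClosed_Icc isClosed_Ici
  refine hclosed.Icc_subset_of_forall_mem_nhdsWithin (le_refl (u a)) ?_ ht
  rintro s ⟨hs : u a ≤ u s, has, hsb⟩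
  have hpos : ∀ᶠ t in 𝓝[≥] s, ∀ i, 0 < u t i := by
    have hs_cont : ContinuousWithinAt u (Ici s) s := by
      rw [← continuousWithinAt_Icc_iff_Ici hsb]
      exact (hcont s ⟨has, hsb.le⟩).mono (Icc_subset_Icc_left has)
    exact eventually_all.2 fun i => (continuousWithinAt_pi.1 hs_cont i).eventually
      (lt_mem_nhds ((ha i).trans_le (hs i)))
  obtain ⟨δ, hδ, hIco⟩ := mem_nhdsGE_iff_exists_Ico_subset.1 hpos
  filter_upwards [Ioo_mem_nhdsGT (lt_min hδ hsb)] with t ht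
  have hsub : Icc s t ⊆ Icc a b := Icc_subset_Icc has (ht.2.le.trans (min_le_right _ _))
  have hmono (i : ι) : MonotoneOn (u · i) (Icc s t) :=
    monotoneOn_of_hasDerivWithinAt_nonneg (convex_Icc s t)
      ((continuousOn_pi.1 hcont i).mono hsub)
      (fun τ hτ => (hasDerivWithinAt_pi.1 (hu τ (hsub (interior_subset hτ))) i).mono
        (interior_subset.trans hsub))
      fun τ hτ => by
        have hτ' := interior_subset hτ
        refine Finset.sum_nonneg fun j _ => mul_nonneg (hA τ (hsub hτ') i j) ?_
        exact (hIco ⟨hτ'.1, hτ'.2.trans_lt (ht.2.trans_le (min_le_left _ _))⟩ j).le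
  exact fun i => (hs i).trans (hmono i (left_mem_Icc.2 ht.1.le) (right_mem_Icc.2 ht.1.le) ht.1.le)

-- Replacing `u` by `exp (κ t) • u` shifts the diagonal of `A` by `κ`, which makes `A` nonnegative.
theorem pos_of_hasDerivWithinAt_mulVec
    (hu : ∀ t ∈ Icc a b, HasDerivWithinAt u (A t *ᵥ u t) (Icc a b) t)
    (hA : ∀ t ∈ Icc a b, ∀ i j, i ≠ j → 0 ≤ A t i j)
    (hdiag : ∀ i, ContinuousOn (fun t => A t i i) (Icc a b))
    (ha : ∀ i, 0 < u a i) {t : ℝ} (ht : t ∈ Icc a b) (i : ι) : 0 < u t i := by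
  classical
  obtain ⟨κ, hκ⟩ : ∃ κ, ∀ t ∈ Icc a b, ‖fun i => A t i i‖ ≤ κ :=
    isCompact_Icc.exists_bound_of_continuousOn (continuousOn_pi.2 hdiag)
  have hshift : ∀ t ∈ Icc a b, HasDerivWithinAt (fun t => Real.exp (κ * t) • u t)
      ((A t + κ • (1 : Matrix ι ι ℝ)) *ᵥ (Real.exp (κ * t) • u t)) (Icc a b) t := by
    intro t ht
    have hexp : HasDerivWithinAt (fun t => Real.exp (κ * t)) (Real.exp (κ * t) * κ)
        (Icc a b) t := by
      simpa using ((hasDerivAt_id t).const_mul κ).exp.hasDerivWithinAt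
    refine (hexp.smul (hu t ht)).congr_deriv ?_
    rw [mulVec_smul, add_mulVec, smul_mulVec, one_mulVec, smul_add, smul_smul]
  have hnonneg : ∀ t ∈ Icc a b, ∀ i j, 0 ≤ (A t + κ • (1 : Matrix ι ι ℝ)) i j := by
    intro t ht i j
    rcases eq_or_ne i j with rfl | hij
    · have hle : |A t i i| ≤ κ := (norm_le_pi_norm (fun i => A t i i) i).trans (hκ t ht)
      rw [Matrix.add_apply, Matrix.smul_apply, one_apply_eq, smul_eq_mul, mul_one]
      linarith [neg_abs_le (A t i i)]
    · simpa [hij] using hA t ht i j hij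
  have hle := le_of_hasDerivWithinAt_mulVec_of_nonneg hshift hnonneg
    (fun i => mul_pos (Real.exp_pos _) (ha i)) ht i
  exact pos_of_mul_pos_right ((mul_pos (Real.exp_pos _) (ha i)).trans_le hle) (Real.exp_pos _).le

end Metzler

section DLN

/-- The curve `x` solves the DLN equation `x' = x (r - M x)` (coordinatewise product) on `[0, ∞)`;
derivatives are two-sided, also at `0`. -/
def IsDLNSolution (M : Matrix ι ι ℝ) (r : ι → ℝ) (x : ℝ → ι → ℝ) : Prop :=
  ∀ t ≥ 0, HasDerivAt x (x t * (r - M *ᵥ x t)) t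

/-- `∫₀ˢ x(u ℓ) du`, taken coordinatewise; it is `z^{(ε)}(s)` for `x = θ^{(ε)}` and
`ℓ = log (1 / ε)`. -/
noncomputable def rescaledIntegral (x : ℝ → ι → ℝ) (ℓ s : ℝ) : ι → ℝ :=
  fun i => ∫ u in (0 : ℝ)..s, x (u * ℓ) i

namespace IsDLNSolution

variable {M : Matrix ι ι ℝ} {r : ι → ℝ} {x : ℝ → ι → ℝ} {t ℓ s : ℝ}

theorem hasDerivAt_apply (hx : IsDLNSolution M r x) (ht : 0 ≤ t) (i : ι) :
    HasDerivAt (x · i) (x t i * (r - M *ᵥ x t) i) t :=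
  hasDerivAt_pi.1 (hx t ht) i

theorem continuousOn (hx : IsDLNSolution M r x) : ContinuousOn x (Ici 0) :=
  fun t ht => (hx t ht).continuousAt.continuousWithinAt

theorem pos (hx : IsDLNSolution M r x) (hx0 : ∀ i, 0 < x 0 i) (ht : 0 ≤ t) (i : ι) :
    0 < x t i := by
  classical
  have hcont : ContinuousOn (fun t => r - M *ᵥ x t) (Ici 0) := by
    have := hx.continuousOn
    fun_prop
  refine pos_of_hasDerivWithinAt_mulVec (A := fun t => diagonal (r - M *ᵥ x t)) (b := t)
    (fun τ hτ => ?_) (fun τ _ j l hjl => (diagonal_apply_ne _ hjl).ge) (fun j => ?_) hx0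
    (right_mem_Icc.2 ht) i
  · refine (hx τ hτ.1).hasDerivWithinAt.congr_deriv (funext fun j => ?_)
    rw [mulVec_diagonal, Pi.mul_apply, mul_comm]
  · simp only [diagonal_apply_eq]
    exact (continuousOn_pi.1 hcont j).mono Icc_subset_Ici_self

theorem hasDerivAt_rate (hx : IsDLNSolution M r x) (ht : 0 ≤ t) :
    HasDerivAt (fun τ => r - M *ᵥ x τ)
      ((of fun i j => -M i j * x t j) *ᵥ (r - M *ᵥ x t)) t := by
  have hM := (mulVecLin M).toContinuousLinearMap.hasFDerivAt.comp_hasDerivAt t (hx t ht)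
  refine (hM.const_sub r).congr_deriv (funext fun i => ?_)
  change -∑ j, M i j * (x t j * (r - M *ᵥ x t) j) = ∑ j, -M i j * x t j * (r - M *ᵥ x t) j
  rw [← Finset.sum_neg_distrib]
  exact Finset.sum_congr rfl fun j _ => by ring

theorem intervalIntegrable_comp_mul (hx : IsDLNSolution M r x) (hℓ : 0 ≤ ℓ) (hs : 0 ≤ s) (i : ι) :
    IntervalIntegrable (fun u => x (u * ℓ) i) MeasureTheory.volume 0 s := by
  refine ContinuousOn.intervalIntegrable ?_
  rw [uIcc_of_le hs]
  exact (continuousOn_pi.1 hx.continuousOn i).comp (by fun_prop)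
    fun u hu => mul_nonneg hu.1 hℓ

theorem rescaledIntegral_nonneg (hx : IsDLNSolution M r x) (hx0 : ∀ i, 0 < x 0 i) (hℓ : 0 ≤ ℓ)
    (hs : 0 ≤ s) : 0 ≤ rescaledIntegral x ℓ s := fun i =>
  intervalIntegral.integral_nonneg hs fun _ hu => (hx.pos hx0 (mul_nonneg hu.1 hℓ) i).le

theorem log_comp_mul_eq (hx : IsDLNSolution M r x) (hx0 : ∀ i, 0 < x 0 i) (hℓ : 0 ≤ ℓ)
    (hs : 0 ≤ s) (i : ι) :
    Real.log (x (s * ℓ) i) =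
      Real.log (x 0 i) + ℓ * (s * r i - (M *ᵥ rescaledIntegral x ℓ s) i) := by
  have hderiv : ∀ u ∈ uIcc 0 s, HasDerivAt (fun u => Real.log (x (u * ℓ) i))
      (ℓ * (r i - ∑ j, M i j * x (u * ℓ) j)) u := by
    intro u hu
    rw [uIcc_of_le hs] at hu
    have hu' : 0 ≤ u * ℓ := mul_nonneg hu.1 hℓ
    have hcomp : HasDerivAt (fun u => x (u * ℓ) i)
        (x (u * ℓ) i * (r - M *ᵥ x (u * ℓ)) i * ℓ) u :=
      (hx.hasDerivAt_apply hu' i).comp (h₂ := (x · i)) u (hasDerivAt_mul_const ℓ)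
    refine (hcomp.log (hx.pos hx0 hu' i).ne').congr_deriv ?_
    rw [div_eq_iff (hx.pos hx0 hu' i).ne', Pi.sub_apply, mulVec, dotProduct]
    ring
  have hint (j : ι) := (hx.intervalIntegrable_comp_mul hℓ hs j).const_mul (M i j)
  have hsum : IntervalIntegrable (fun u => ∑ j, M i j * x (u * ℓ) j) MeasureTheory.volume 0 s := by
    simpa only [Finset.sum_fn] using IntervalIntegrable.sum Finset.univ fun j _ => hint j
  have hftc := intervalIntegral.integral_eq_sub_of_hasDerivAt hderiv
    ((intervalIntegrable_const.sub hsum).const_mul ℓ)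
  rw [intervalIntegral.integral_const_mul, intervalIntegral.integral_sub intervalIntegrable_const
    hsum, intervalIntegral.integral_finsetSum fun j _ => hint j] at hftc
  simp only [intervalIntegral.integral_const_mul, intervalIntegral.integral_const, sub_zero,
    smul_eq_mul, zero_mul] at hftc
  simp only [mulVec, dotProduct, rescaledIntegral]
  linarith

variable (hM : ∀ i j, i ≠ j → M i j ≤ 0) (hx0 : ∀ i, 0 < x 0 i)
  (hr0 : ∀ i, 0 < (r - M *ᵥ x 0) i)

include hM hx0 hr0

theorem rate_pos (hx : IsDLNSolution M r x) (ht : 0 ≤ t) (i : ι) : 0 < (r - M *ᵥ x t) i := by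
  refine pos_of_hasDerivWithinAt_mulVec (u := fun τ => r - M *ᵥ x τ)
    (A := fun τ => of fun i j => -M i j * x τ j) (b := t)
    (fun τ hτ => (hx.hasDerivAt_rate hτ.1).hasDerivWithinAt) (fun τ hτ j l hjl => ?_)
    (fun j => ?_) hr0 (right_mem_Icc.2 ht) i
  · exact mul_nonneg (neg_nonneg.2 (hM j l hjl)) (hx.pos hx0 hτ.1 l).le
  · exact continuousOn_const.mul
      ((continuousOn_pi.1 hx.continuousOn j).mono Icc_subset_Ici_self)

theorem monotoneOn (hx : IsDLNSolution M r x) (i : ι) : MonotoneOn (x · i) (Ici 0) :=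
  monotoneOn_of_hasDerivWithinAt_nonneg (convex_Ici 0) (continuousOn_pi.1 hx.continuousOn i)
    (fun _ ht => (hx.hasDerivAt_apply (interior_subset ht) i).hasDerivWithinAt)
    fun _ ht => (mul_pos (hx.pos hx0 (interior_subset ht) i)
      (hx.rate_pos hM hx0 hr0 (interior_subset ht) i)).le

theorem norm_le {c : ℝ} (hc : 0 < c) (hcM : ∀ v, c * ‖v‖ ^ 2 ≤ v ⬝ᵥ M *ᵥ v)
    (hx : IsDLNSolution M r x) (ht : 0 ≤ t) : ‖x t‖ ≤ (∑ i, |r i|) / c := by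
  have hle : 0 ≤ x t ⬝ᵥ (r - M *ᵥ x t) :=
    dotProduct_nonneg_of_nonneg (fun i => (hx.pos hx0 ht i).le)
      fun i => (hx.rate_pos hM hx0 hr0 ht i).le
  rw [dotProduct_sub, sub_nonneg] at hle
  simpa using norm_le_of_mul_norm_sq_le_mul_dotProduct hc zero_le_one
    (((hcM _).trans hle).trans_eq (one_mul _).symm)

theorem rescaledIntegral_le (hx : IsDLNSolution M r x) (hℓ : 0 ≤ ℓ) (hs : 0 ≤ s) (i : ι) :
    rescaledIntegral x ℓ s i ≤ s * x (s * ℓ) i := by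
  have hle : ∀ u ∈ Icc 0 s, x (u * ℓ) i ≤ x (s * ℓ) i := fun u hu =>
    hx.monotoneOn hM hx0 hr0 i (mul_nonneg hu.1 hℓ) (mul_nonneg hs hℓ)
      (mul_le_mul_of_nonneg_right hu.2 hℓ)
  simpa [rescaledIntegral] using intervalIntegral.integral_mono_on hs
    (hx.intervalIntegrable_comp_mul hℓ hs i) intervalIntegrable_const hle

end IsDLNSolution

end DLN

section Convergence

theorem sub_mul_neg_log_le {x a Z z : ℝ} (hx : 0 < x) (hZ : 0 ≤ Z) (hZx : Z ≤ a * x) (hz : 0 ≤ z) :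
    (Z - z) * -Real.log x ≤ a + z * x := by
  have hZlog : Z * -Real.log x ≤ a := calc
    Z * -Real.log x ≤ Z * x⁻¹ := by gcongr; linarith [Real.one_sub_inv_le_log_of_pos hx]
    _ ≤ a := by rwa [← div_eq_mul_inv, div_le_iff₀ hx]
  have hzlog : z * Real.log x ≤ z * x := by gcongr; exact Real.log_le_self hx.le
  linarith

namespace IsDLNSolution

variable {M : Matrix ι ι ℝ} {r C k w z : ι → ℝ} {x : ℝ → ι → ℝ} {c ℓ s : ℝ}

-- With `ℓ = log (1 / ε)`, the factor `exp (-(ℓ * k i))` is `ε ^ k i`.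
theorem add_mulVec_rescaledIntegral_eq (hx : IsDLNSolution M r x) (hC : ∀ i, 0 < C i)
    (hinit : ∀ i, x 0 i = C i * Real.exp (-(ℓ * k i))) (hℓ : 0 < ℓ) (hs : 0 ≤ s) (i : ι) :
    (k - s • r + M *ᵥ rescaledIntegral x ℓ s) i = -Real.log (x (s * ℓ) i / C i) / ℓ := by
  have hx0 (i : ι) : 0 < x 0 i := hinit i ▸ mul_pos (hC i) (Real.exp_pos _)
  have hlog0 : Real.log (x 0 i) = Real.log (C i) - ℓ * k i := by
    rw [hinit, Real.log_mul (hC i).ne' (Real.exp_ne_zero _), Real.log_exp, sub_eq_add_neg]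
  rw [Real.log_div (hx.pos hx0 (mul_nonneg hs hℓ.le) i).ne' (hC i).ne',
    hx.log_comp_mul_eq hx0 hℓ.le hs, hlog0, eq_div_iff hℓ.ne']
  simp only [Pi.add_apply, Pi.sub_apply, Pi.smul_apply, smul_eq_mul]
  ring

theorem log_comp_mul_div_neg_eq (hx : IsDLNSolution M r x) (hC : ∀ i, 0 < C i)
    (hinit : ∀ i, x 0 i = C i * Real.exp (-(ℓ * k i))) (hℓ : 0 < ℓ) (hs : 0 ≤ s) (i : ι) :
    Real.log (x (s * ℓ) i) / -ℓ =
      (k - s • r + M *ᵥ rescaledIntegral x ℓ s) i - Real.log (C i) / ℓ := by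
  have hx0 (i : ι) : 0 < x 0 i := hinit i ▸ mul_pos (hC i) (Real.exp_pos _)
  rw [hx.add_mulVec_rescaledIntegral_eq hC hinit hℓ hs,
    Real.log_div (hx.pos hx0 (mul_nonneg hs hℓ.le) i).ne' (hC i).ne']
  ring

variable (hM : ∀ i j, i ≠ j → M i j ≤ 0) (hc : 0 < c) (hcM : ∀ v, c * ‖v‖ ^ 2 ≤ v ⬝ᵥ M *ᵥ v)
  (hC : ∀ i, 0 < C i) (hk : 0 ≤ k) (hinit : ∀ i, x 0 i = C i * Real.exp (-(ℓ * k i)))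
  (hr0 : ∀ i, 0 < (r - M *ᵥ x 0) i) (hℓ : 0 < ℓ) (hs : 0 ≤ s)

include hM hc hcM hC hk hinit hr0 hℓ hs

theorem rescaledIntegral_sub_mul_le (hx : IsDLNSolution M r x)
    (h : IsLCPSolution M (k - s • r) w z) (i : ι) :
    (rescaledIntegral x ℓ s - z) i * (k - s • r + M *ᵥ rescaledIntegral x ℓ s) i ≤
      s * (C i + ((∑ j, |r j|) / c) ^ 2 / C i) / ℓ := by
  have hx0 (i : ι) : 0 < x 0 i := hinit i ▸ mul_pos (hC i) (Real.exp_pos _)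
  have hsℓ : 0 ≤ s * ℓ := mul_nonneg hs hℓ.le
  have hCi := hC i
  have hxi : 0 < x (s * ℓ) i := hx.pos hx0 hsℓ i
  set B := (∑ j, |r j|) / c
  have hxB : x (s * ℓ) i ≤ B :=
    (le_abs_self _).trans ((norm_le_pi_norm _ i).trans (hx.norm_le hM hx0 hr0 hc hcM hsℓ))
  have hzB : z i ≤ s * B :=
    (le_abs_self _).trans ((norm_le_pi_norm _ i).trans (h.norm_le hc hcM hs hk))
  have hZx : rescaledIntegral x ℓ s i ≤ s * C i * (x (s * ℓ) i / C i) := by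
    rw [mul_assoc, mul_div_cancel₀ _ hCi.ne']
    exact hx.rescaledIntegral_le hM hx0 hr0 hℓ.le hs i
  rw [hx.add_mulVec_rescaledIntegral_eq hC hinit hℓ hs, ← mul_div_assoc]
  refine div_le_div_of_nonneg_right ?_ hℓ.le
  calc (rescaledIntegral x ℓ s i - z i) * -Real.log (x (s * ℓ) i / C i)
      ≤ s * C i + z i * (x (s * ℓ) i / C i) :=
        sub_mul_neg_log_le (div_pos hxi hCi) (hx.rescaledIntegral_nonneg hx0 hℓ.le hs i) hZx
          (h.nonneg i)
    _ ≤ s * C i + s * B * (B / C i) := by gcongr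
    _ = s * (C i + B ^ 2 / C i) := by ring

theorem norm_rescaledIntegral_sub_sq_le (hx : IsDLNSolution M r x)
    (h : IsLCPSolution M (k - s • r) w z) :
    ‖rescaledIntegral x ℓ s - z‖ ^ 2 ≤
      s * (∑ i, (C i + ((∑ j, |r j|) / c) ^ 2 / C i)) / (c * ℓ) := by
  have hx0 (i : ι) : 0 < x 0 i := hinit i ▸ mul_pos (hC i) (Real.exp_pos _)
  have hsum : c * ‖rescaledIntegral x ℓ s - z‖ ^ 2 ≤
      ∑ i, s * (C i + ((∑ j, |r j|) / c) ^ 2 / C i) / ℓ := by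
    refine ((hcM _).trans (h.sub_dotProduct_mulVec_sub_le
      (hx.rescaledIntegral_nonneg hx0 hℓ.le hs))).trans (Finset.sum_le_sum fun i _ => ?_)
    exact hx.rescaledIntegral_sub_mul_le hM hc hcM hC hk hinit hr0 hℓ hs h i
  rwa [← Finset.sum_div, ← Finset.mul_sum, ← le_div_iff₀' hc, div_div, mul_comm ℓ] at hsum

end IsDLNSolution

theorem tendsto_log_one_div_nhdsGT_zero :
    Tendsto (fun ε : ℝ => Real.log (1 / ε)) (𝓝[>] 0) atTop := by
  simpa only [one_div, Real.log_inv, Function.comp_def] using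
    tendsto_neg_atBot_atTop.comp Real.tendsto_log_nhdsGT_zero

theorem eventually_sub_mulVec_mul_rpow_pos (M : Matrix ι ι ℝ) {r k : ι → ℝ} (C : ι → ℝ)
    (hr : ∀ i, 0 < r i) (hk : ∀ i, 0 < k i) :
    ∀ᶠ ε : ℝ in 𝓝[>] 0, ∀ i, 0 < (r - M *ᵥ fun j => C j * ε ^ k j) i := by
  have hcont : ContinuousAt (fun ε : ℝ => r - M *ᵥ fun j => C j * ε ^ k j) 0 := by
    have hpow : ContinuousAt (fun (ε : ℝ) j => C j * ε ^ k j) 0 := continuousAt_pi.2 fun j =>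
      (Real.continuousAt_rpow_const 0 (k j) (Or.inr (hk j).le)).const_mul (C j)
    exact continuousAt_const.sub
      ((mulVecLin M).toContinuousLinearMap.continuous.continuousAt.comp hpow)
  have hzero : (r - M *ᵥ fun j => C j * (0 : ℝ) ^ k j) = r := by
    simp [Real.zero_rpow (hk _).ne', ← Pi.zero_def]
  exact eventually_nhdsWithin_of_eventually_nhds <| eventually_all.2 fun i =>
    (continuousAt_pi.1 hcont i).eventually (lt_mem_nhds ((hr i).trans_eq (congrFun hzero i).symm))

theorem rpow_eq_exp_neg_log_one_div_mul {ε : ℝ} (hε : 0 < ε) (a : ℝ) :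
    ε ^ a = Real.exp (-(Real.log (1 / ε) * a)) := by
  rw [Real.rpow_def_of_pos hε, one_div, Real.log_inv, neg_mul, neg_neg]

variable {M : Matrix ι ι ℝ} {r C k : ι → ℝ} {θ : ℝ → ℝ → ι → ℝ} {w z : ℝ → ι → ℝ} {K : Set ℝ}

theorem tendstoUniformlyOn_rescaledIntegral (hM : ∀ v ≠ 0, 0 < v ⬝ᵥ M *ᵥ v)
    (hr : ∀ i, 0 < r i) (hoff : ∀ i j, i ≠ j → M i j ≤ 0)
    (hC : ∀ i, 0 < C i) (hk : ∀ i, 0 < k i)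
    (hinit : ∀ ε ∈ Ioc (0 : ℝ) 1, ∀ i, θ ε 0 i = C i * ε ^ k i)
    (hode : ∀ ε ∈ Ioc (0 : ℝ) 1, IsDLNSolution M r (θ ε))
    (hwz : ∀ s ∈ K, IsLCPSolution M (k - s • r) (w s) (z s))
    (hK : K ⊆ Ici 0) (hKb : BddAbove K) :
    TendstoUniformlyOn (fun ε s => rescaledIntegral (θ ε) (Real.log (1 / ε)) s) z (𝓝[>] 0) K := by
  obtain ⟨c, hc, hcM⟩ := exists_pos_mul_norm_sq_le_dotProduct_mulVec hM
  obtain ⟨S, hS⟩ := hKb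
  set D := ∑ i, (C i + ((∑ j, |r j|) / c) ^ 2 / C i)
  have hD : 0 ≤ D := Finset.sum_nonneg fun i _ =>
    add_nonneg (hC i).le (div_nonneg (sq_nonneg _) (hC i).le)
  have hbound : Tendsto (fun ε : ℝ => S * D / (c * Real.log (1 / ε))) (𝓝[>] 0) (𝓝 0) :=
    (tendsto_log_one_div_nhdsGT_zero.const_mul_atTop hc).const_div_atTop _
  rw [Metric.tendstoUniformlyOn_iff]
  intro η hη
  filter_upwards [eventually_sub_mulVec_mul_rpow_pos M C hr hk, Ioo_mem_nhdsGT zero_lt_one,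
    hbound.eventually (gt_mem_nhds (pow_pos hη 2))] with ε hr0 hε hlt s hs
  have hε' : ε ∈ Ioc (0 : ℝ) 1 := Ioo_subset_Ioc_self hε
  have hℓ : 0 < Real.log (1 / ε) := Real.log_pos (one_lt_one_div hε.1 hε.2)
  rw [← funext (hinit ε hε')] at hr0
  rw [dist_comm, dist_eq_norm]
  refine lt_of_pow_lt_pow_left₀ 2 hη.le (lt_of_le_of_lt ?_ hlt)
  have hsS : s ≤ S := hS hs
  calc ‖rescaledIntegral (θ ε) (Real.log (1 / ε)) s - z s‖ ^ 2
      ≤ s * D / (c * Real.log (1 / ε)) :=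
        (hode ε hε').norm_rescaledIntegral_sub_sq_le hoff hc hcM hC (fun i => (hk i).le)
          (fun i => by rw [hinit ε hε', rpow_eq_exp_neg_log_one_div_mul hε.1]) hr0 hℓ (hK hs)
          (hwz s hs)
    _ ≤ S * D / (c * Real.log (1 / ε)) := by gcongr

theorem dln_lcp_convergence_general (hM : ∀ v ≠ 0, 0 < v ⬝ᵥ M *ᵥ v)
    (hr : ∀ i, 0 < r i) (hoff : ∀ i j, i ≠ j → M i j ≤ 0)
    (hC : ∀ i, 0 < C i) (hk : ∀ i, 0 < k i)
    (hinit : ∀ ε ∈ Ioc (0 : ℝ) 1, ∀ i, θ ε 0 i = C i * ε ^ k i)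
    (hode : ∀ ε ∈ Ioc (0 : ℝ) 1, IsDLNSolution M r (θ ε))
    (hwz : ∀ s ∈ K, IsLCPSolution M (k - s • r) (w s) (z s))
    (hK : K ⊆ Ici 0) (hKb : BddAbove K) :
    TendstoUniformlyOn (fun ε s i => Real.log (θ ε (s * Real.log (1 / ε)) i) / Real.log ε) w
        (𝓝[>] 0) K ∧
      TendstoUniformlyOn (fun ε s => rescaledIntegral (θ ε) (Real.log (1 / ε)) s) z (𝓝[>] 0) K := by
  have hz := tendstoUniformlyOn_rescaledIntegral hM hr hoff hC hk hinit hode hwz hK hKb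
  refine ⟨?_, hz⟩
  have hq : TendstoUniformlyOn (fun (_ : ℝ) (s : ℝ) => k - s • r) (fun s => k - s • r) (𝓝[>] 0) K :=
    fun _ hu => .of_forall fun _ _ _ => refl_mem_uniformity hu
  have hMz : TendstoUniformlyOn
      (fun ε s => M *ᵥ rescaledIntegral (θ ε) (Real.log (1 / ε)) s) (fun s => M *ᵥ z s)
      (𝓝[>] 0) K :=
    (mulVecLin M).toContinuousLinearMap.uniformContinuous.comp_tendstoUniformlyOn hz
  have hlogC : Tendsto (fun (ε : ℝ) i => Real.log (C i) / Real.log (1 / ε)) (𝓝[>] 0) (𝓝 0) :=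
    tendsto_pi_nhds.2 fun i => tendsto_log_one_div_nhdsGT_zero.const_div_atTop _
  refine (((hq.add hMz).sub (hlogC.tendstoUniformlyOn_const K)).congr ?_).congr_right ?_
  · filter_upwards [Ioo_mem_nhdsGT zero_lt_one] with ε hε s hs
    have hε' : ε ∈ Ioc (0 : ℝ) 1 := Ioo_subset_Ioc_self hε
    have hneg : Real.log ε = -Real.log (1 / ε) := by rw [one_div, Real.log_inv, neg_neg]
    funext i
    rw [hneg]
    refine ((hode ε hε').log_comp_mul_div_neg_eq hC (fun j => ?_)
      (Real.log_pos (one_lt_one_div hε.1 hε.2)) (hK hs) i).symm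
    rw [hinit ε hε', rpow_eq_exp_neg_log_one_div_mul hε.1]
  · intro s hs
    simp [(hwz s hs).eq_add_mulVec]

end Convergence

end

/-- Proposition 5: Under (A1) and (A2), let `(w(s), z(s))` solve the LCP
`w = k − s·r + Mz`, `w ≥ 0`, `z ≥ 0`, `wᵀz = 0` for each `s ≥ 0`. Then the rescaled
logarithmic coordinates `wᵢ^{(ε)}(s) = log θᵢ^{(ε)}(s log(1/ε)) / log ε` and the
integrals `z^{(ε)}(s) = ∫₀^s θ^{(ε)}(u log(1/ε)) du` converge to `w(s)` and `z(s)` as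
`ε → 0⁺`, uniformly on compact subsets of `[0, ∞)`. -/
theorem dln_lcp_convergence (n d : ℕ) (hn : 0 < n) (hd : 0 < d)
    (X : Matrix (Fin n) (Fin d) ℝ) (y : Fin n → ℝ)
    (M : Matrix (Fin d) (Fin d) ℝ) (r : Fin d → ℝ)
    (hM : M = Xᵀ * X) (hr : r = Xᵀ *ᵥ y)
    (hA1 : ∀ i, 0 < r i)
    (hA2 : ∀ i j, i ≠ j → M i j ≤ 0)
    (C k : Fin d → ℝ) (hC : ∀ i, 0 < C i) (hk : ∀ i, 0 < k i)
    (θ : ℝ → ℝ → Fin d → ℝ)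
    (hθinit : ∀ ε ∈ Set.Ioc (0 : ℝ) 1, ∀ i, θ ε 0 i = C i * ε ^ k i)
    (hθode : ∀ ε ∈ Set.Ioc (0 : ℝ) 1, ∀ t ≥ (0 : ℝ), ∀ i,
      HasDerivAt (fun τ => θ ε τ i) (θ ε t i * (r i - (M *ᵥ θ ε t) i)) t)
    (w z : ℝ → Fin d → ℝ)
    (hwz : ∀ s ≥ (0 : ℝ),
      (∀ i, w s i = k i - s * r i + (M *ᵥ z s) i) ∧
      (∀ i, 0 ≤ w s i) ∧ (∀ i, 0 ≤ z s i) ∧ ∑ i, w s i * z s i = 0) :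
    ∀ K : Set ℝ, K ⊆ Set.Ici 0 → IsCompact K →
      TendstoUniformlyOn
        (fun ε s => fun i => Real.log (θ ε (s * Real.log (1 / ε)) i) / Real.log ε)
        w (nhdsWithin 0 (Set.Ioi 0)) K ∧
      TendstoUniformlyOn
        (fun ε s => fun i => ∫ u in (0 : ℝ)..s, θ ε (u * Real.log (1 / ε)) i)
        z (nhdsWithin 0 (Set.Ioi 0)) K := by
  subst hM hr
  intro K hK hKc
  refine dln_lcp_convergence_general (fun v => dotProduct_gram_mulVec_pos hA1 hA2) hA1 hA2 hC hk
    hθinit (fun ε hε t ht => hasDerivAt_pi.2 (hθode ε hε t ht)) (fun s hs => ?_) hK hKc.bddAbove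
  obtain ⟨heq, hw, hz, hcompl⟩ := hwz s (hK hs)
  exact ⟨funext heq, hw, hz, hcompl⟩
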